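/- arXiv:1508.06123 — 2 statements merged into one kernel-verified Lean document; each statement's English description precedes it below -/
import Mathlib

section
/- Fix k ∈ ℤ. Let v, h: ℝ → ℝ be continuous and 1-periodic with ∫₀¹ v = kπ, ∫₀¹ h = 0, and ∫₀¹ exp(2i(∂ₓ⁻¹v)(x)) dx ≠ 0, and define H_sg(w) := ¼ ∫₀¹ cos( 2(∂ₓ⁻¹w)(x) + c_sg(w) ) dx whenever c_sg(w) is defined (the value is independent of the representative of c_sg(w) modulo 2π). Then: (a) the function x ↦ sin( 2(∂ₓ⁻¹v)(x) + c_sg(v) ) is continuous, 1-periodic with mean zero; (b) for all sufficiently small ε, ∫₀¹ exp(2i(∂ₓ⁻¹(v+εh))(x)) dx ≠ 0; and (c) the map ε ↦ H_sg(v + εh) is differentiable at ε = 0 with derivative ½ ∫₀¹ ( ∂ₓ⁻¹ sin(2∂ₓ⁻¹v + c_sg(v)) )(x) · h(x) dx. -/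
open MeasureTheory Real intervalIntegral

/-- The mean-zero antiderivative of a (continuous, 1-periodic, mean-zero) function:
`(∂ₓ⁻¹ f)(x) = ∫₀ˣ f(s) ds − ∫₀¹ ∫₀ʸ f(s) ds dy`. -/
noncomputable def pInv (f : ℝ → ℝ) (x : ℝ) : ℝ :=
  (∫ s in (0:ℝ)..x, f s) - ∫ y in (0:ℝ)..1, ∫ s in (0:ℝ)..y, f s

/-- Extension of `∂ₓ⁻¹` to a 1-periodic `v` of mean `a = ∫₀¹ v`:
`(∂ₓ⁻¹ v)(x) = (∂ₓ⁻¹ (v − a))(x) + a·x`. -/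
noncomputable def pInvG (v : ℝ → ℝ) (x : ℝ) : ℝ :=
  pInv (fun s => v s - ∫ t in (0:ℝ)..1, v t) x + (∫ t in (0:ℝ)..1, v t) * x

/-- `K_{sg}(v) = ∫₀¹ exp (2 i (∂ₓ⁻¹ v)(x)) dx`. -/
noncomputable def Ksg (v : ℝ → ℝ) : ℂ :=
  ∫ x in (0:ℝ)..1, Complex.exp (2 * (pInvG v x : ℂ) * Complex.I)

/-- `c_sg(v) = - arg (∫₀¹ exp (2 i (∂ₓ⁻¹ v)(x)) dx)`, with `arg` valued in `(-π, π]`. -/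
noncomputable def cSg (v : ℝ → ℝ) : ℝ := - (Ksg v).arg

/-- The Hamiltonian `H_sg(w) = ¼ ∫₀¹ cos (2 ∂ₓ⁻¹w + c_sg(w))`. -/
noncomputable def HSg (w : ℝ → ℝ) : ℝ :=
  (1 / 4) * ∫ x in (0:ℝ)..1, Real.cos (2 * pInvG w x + cSg w)

/-! `c_sg` is the rotation that makes `K_sg` real and nonnegative: multiplying `K_sg(w)` by `exp
(i c_sg(w))` gives `|K_sg(w)|`. Taking imaginary parts, `sin (2 ∂ₓ⁻¹w + c_sg(w))` has mean zero;
taking real parts, `H_sg(w) = |K_sg(w)| / 4`, so the discontinuous `arg` never has to be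
differentiated. The derivative of `H_sg` comes out as `-½ ∫₀¹ sin (2 ∂ₓ⁻¹v + c_sg(v)) ∂ₓ⁻¹h`, and
`∂ₓ⁻¹` is skew-adjoint on integrable functions of mean zero, whose antiderivatives are absolutely
continuous. -/

section NormDeriv

open scoped InnerProductSpace

lemma hasDerivAt_norm {F : Type*} [NormedAddCommGroup F] [InnerProductSpace ℝ F]
    {f : ℝ → F} {f' : F} {t : ℝ} (hf : HasDerivAt f f' t) (h0 : f t ≠ 0) :
    HasDerivAt (fun s => ‖f s‖) (⟪f t, f'⟫_ℝ / ‖f t‖) t := by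
  have hsq := hf.norm_sq.sqrt (pow_ne_zero 2 (norm_ne_zero_iff.2 h0))
  simp only [Real.sqrt_sq (norm_nonneg _)] at hsq
  exact hsq.congr_deriv (mul_div_mul_left _ _ two_ne_zero)

end NormDeriv

lemma hasDerivAt_integral_cexp_add_mul_mul_I {α : Type*} [MeasurableSpace α] {μ : Measure α}
    [IsFiniteMeasure μ] {θ η : α → ℝ} (hθ : AEStronglyMeasurable θ μ) (hη : Integrable η μ)
    (t : ℝ) :
    HasDerivAt (fun s : ℝ => ∫ x, Complex.exp ((θ x + s * η x : ℝ) * Complex.I) ∂μ)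
      (∫ x, Complex.exp ((θ x + t * η x : ℝ) * Complex.I) * (η x * Complex.I) ∂μ) t := by
  have hη_meas : AEStronglyMeasurable (fun x => (η x : ℂ)) μ :=
    Complex.continuous_ofReal.comp_aestronglyMeasurable hη.1
  have hexp_meas (s : ℝ) :
      AEStronglyMeasurable (fun x => Complex.exp ((θ x + s * η x : ℝ) * Complex.I)) μ :=
    Continuous.comp_aestronglyMeasurable (g := fun r : ℝ => Complex.exp (r * Complex.I))
      (by fun_prop) (hθ.add (hη.1.const_mul s))
  refine (hasDerivAt_integral_of_dominated_loc_of_deriv_le (bound := fun x => |η x|)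
    (F' := fun s x => Complex.exp ((θ x + s * η x : ℝ) * Complex.I) * (η x * Complex.I))
    Filter.univ_mem (.of_forall hexp_meas) ?_ ((hexp_meas t).mul (hη_meas.mul_const _))
    (.of_forall fun x s _ => ?_) hη.abs (.of_forall fun x s _ => ?_)).2
  · exact .of_bound (hexp_meas t) 1
      (.of_forall fun x => (Complex.norm_exp_ofReal_mul_I _).le)
  · rw [norm_mul, Complex.norm_exp_ofReal_mul_I]
    simp
  · have hphase : HasDerivAt (fun s : ℝ => θ x + s * η x) (η x) s := by
      simpa using ((hasDerivAt_id s).mul_const (η x)).const_add (θ x)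
    exact (hphase.ofReal_comp.mul_const Complex.I).cexp

section Antiderivative

open Set

variable {f g : ℝ → ℝ} {x : ℝ}

lemma continuous_pInv (hf : ∀ a b, IntervalIntegrable f volume a b) : Continuous (pInv f) :=
  (continuous_primitive hf 0).sub continuous_const

lemma absolutelyContinuousOnInterval_pInv (hf : IntervalIntegrable f volume 0 1) :
    AbsolutelyContinuousOnInterval (pInv f) 0 1 :=
  (hf.absolutelyContinuousOnInterval_intervalIntegral left_mem_uIcc).sub
    (LipschitzWith.const _).lipschitzOnWith.absolutelyContinuousOnInterval

lemma ae_deriv_pInv (hf : IntervalIntegrable f volume 0 1) :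
    ∀ᵐ x, x ∈ uIcc (0 : ℝ) 1 → deriv (pInv f) x = f x := by
  filter_upwards [hf.ae_hasDerivAt_integral] with x hderiv hx
  exact ((hderiv hx 0 left_mem_uIcc).sub_const _).deriv

lemma pInv_one_eq_pInv_zero (hf : ∫ x in (0 : ℝ)..1, f x = 0) : pInv f 1 = pInv f 0 := by
  simp [pInv, hf]

lemma pInv_add_one (hper : Function.Periodic f 1) (hf : IntervalIntegrable f volume 0 1) (x : ℝ) :
    pInv f (x + 1) = pInv f x + ∫ t in (0 : ℝ)..1, f t := by
  have hperiod : ∫ t in x..x + 1, f t = ∫ t in (0 : ℝ)..1, f t := by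
    simpa using hper.intervalIntegral_add_eq x 0
  have hint := hper.intervalIntegrable₀ one_ne_zero hf
  rw [pInv, pInv, ← integral_add_adjacent_intervals (hint 0 x) (hint x (x + 1)), hperiod]
  ring

lemma pInv_add_const_mul (hf : IntervalIntegrable f volume 0 1)
    (hg : IntervalIntegrable g volume 0 1) (c : ℝ) (hx : x ∈ uIcc (0 : ℝ) 1) :
    pInv (fun s => f s + c * g s) x = pInv f x + c * pInv g x := by
  have hprim : ∀ y ∈ uIcc (0 : ℝ) 1, ∫ s in (0 : ℝ)..y, (f s + c * g s) =
      (∫ s in (0 : ℝ)..y, f s) + c * ∫ s in (0 : ℝ)..y, g s := fun y hy => by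
    have hsub : uIcc 0 y ⊆ uIcc (0 : ℝ) 1 := uIcc_subset_uIcc_left hy
    rw [intervalIntegral.integral_add (hf.mono_set hsub) ((hg.mono_set hsub).const_mul c),
      intervalIntegral.integral_const_mul]
  have hf_prim := continuousOn_primitive_interval' hf left_mem_uIcc
  have hg_prim := continuousOn_primitive_interval' hg left_mem_uIcc
  rw [pInv, hprim x hx, integral_congr hprim, intervalIntegral.integral_add
    hf_prim.intervalIntegrable (hg_prim.intervalIntegrable.const_mul c),
    intervalIntegral.integral_const_mul, pInv, pInv]
  ring

lemma integral_mul_pInv_eq_neg (hf : IntervalIntegrable f volume 0 1)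
    (hg : IntervalIntegrable g volume 0 1) (hf0 : ∫ x in (0 : ℝ)..1, f x = 0)
    (hg0 : ∫ x in (0 : ℝ)..1, g x = 0) :
    ∫ x in (0 : ℝ)..1, f x * pInv g x = -∫ x in (0 : ℝ)..1, pInv f x * g x := by
  have hderiv_f : ∫ x in (0 : ℝ)..1, deriv (pInv f) x * pInv g x =
      ∫ x in (0 : ℝ)..1, f x * pInv g x := by
    refine integral_congr_ae ?_
    filter_upwards [ae_deriv_pInv hf] with x hderiv hx
    rw [hderiv (uIoc_subset_uIcc hx)]
  have hderiv_g : ∫ x in (0 : ℝ)..1, pInv f x * deriv (pInv g) x =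
      ∫ x in (0 : ℝ)..1, pInv f x * g x := by
    refine integral_congr_ae ?_
    filter_upwards [ae_deriv_pInv hg] with x hderiv hx
    rw [hderiv (uIoc_subset_uIcc hx)]
  have hparts := (absolutelyContinuousOnInterval_pInv hf).integral_mul_deriv_eq_deriv_mul
    (absolutelyContinuousOnInterval_pInv hg)
  rw [hderiv_f, hderiv_g, pInv_one_eq_pInv_zero hf0, pInv_one_eq_pInv_zero hg0] at hparts
  linarith

lemma pInvG_eq_pInv (hf : ∫ x in (0 : ℝ)..1, f x = 0) : pInvG f = pInv f := by
  funext x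
  simp [pInvG, hf]

lemma continuous_pInvG (hf : ∀ a b, IntervalIntegrable f volume a b) : Continuous (pInvG f) :=
  (continuous_pInv fun a b => (hf a b).sub intervalIntegrable_const).add
    (continuous_const.mul continuous_id)

lemma continuousOn_pInvG (hf : IntervalIntegrable f volume 0 1) :
    ContinuousOn (pInvG f) (uIcc 0 1) :=
  (absolutelyContinuousOnInterval_pInv (hf.sub intervalIntegrable_const)).continuousOn.add
    (continuous_const.mul continuous_id).continuousOn

lemma pInvG_add_one (hper : Function.Periodic f 1) (hf : IntervalIntegrable f volume 0 1) (x : ℝ) :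
    pInvG f (x + 1) = pInvG f x + ∫ t in (0 : ℝ)..1, f t := by
  have hper' : Function.Periodic (fun s => f s - ∫ t in (0 : ℝ)..1, f t) 1 :=
    fun s => by simp only [hper s]
  have hmean : ∫ s in (0 : ℝ)..1, (f s - ∫ t in (0 : ℝ)..1, f t) = 0 := by
    simp [intervalIntegral.integral_sub hf intervalIntegrable_const]
  rw [pInvG, pInv_add_one hper' (hf.sub intervalIntegrable_const), hmean, pInvG]
  ring

lemma pInvG_add_const_mul (hf : IntervalIntegrable f volume 0 1)
    (hg : IntervalIntegrable g volume 0 1) (c : ℝ) (hx : x ∈ uIcc (0 : ℝ) 1) :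
    pInvG (fun s => f s + c * g s) x = pInvG f x + c * pInvG g x := by
  have hmean : ∫ s in (0 : ℝ)..1, (f s + c * g s) =
      (∫ s in (0 : ℝ)..1, f s) + c * ∫ s in (0 : ℝ)..1, g s := by
    rw [intervalIntegral.integral_add hf (hg.const_mul c), intervalIntegral.integral_const_mul]
  have hcentre : (fun s => f s + c * g s -
      ((∫ t in (0 : ℝ)..1, f t) + c * ∫ t in (0 : ℝ)..1, g t)) =
      fun s => (f s - ∫ t in (0 : ℝ)..1, f t) + c * (g s - ∫ t in (0 : ℝ)..1, g t) := by
    funext s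
    ring
  rw [pInvG, hmean, hcentre, pInv_add_const_mul (hf.sub intervalIntegrable_const)
    (hg.sub intervalIntegrable_const) c hx, pInvG, pInvG]
  ring

end Antiderivative

section Phase

variable {v w : ℝ → ℝ}

lemma integral_cexp_two_mul_pInvG_add (w : ℝ → ℝ) (c : ℝ) :
    ∫ x in (0 : ℝ)..1, Complex.exp ((2 * pInvG w x + c : ℝ) * Complex.I) =
      Ksg w * Complex.exp (c * Complex.I) := by
  rw [Ksg, ← intervalIntegral.integral_mul_const]
  refine integral_congr fun x _ => ?_
  rw [← Complex.exp_add]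
  push_cast
  ring_nf

lemma Ksg_mul_cexp_cSg (w : ℝ → ℝ) : Ksg w * Complex.exp (cSg w * Complex.I) = ‖Ksg w‖ := by
  conv_lhs => rw [← Complex.norm_mul_exp_arg_mul_I (Ksg w)]
  rw [mul_assoc, ← Complex.exp_add]
  simp [cSg]

lemma intervalIntegrable_cexp_two_mul_pInvG_add (hw : IntervalIntegrable w volume 0 1) (c : ℝ) :
    IntervalIntegrable (fun x => Complex.exp ((2 * pInvG w x + c : ℝ) * Complex.I))
      volume 0 1 := by
  have := continuousOn_pInvG hw
  exact ContinuousOn.intervalIntegrable (by fun_prop)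

lemma integral_cos_two_mul_pInvG_add_cSg (hw : IntervalIntegrable w volume 0 1) :
    ∫ x in (0 : ℝ)..1, Real.cos (2 * pInvG w x + cSg w) = ‖Ksg w‖ := by
  have hre := intervalIntegral_re (intervalIntegrable_cexp_two_mul_pInvG_add hw (cSg w))
  rw [integral_cexp_two_mul_pInvG_add, Ksg_mul_cexp_cSg] at hre
  simpa only [RCLike.re_eq_complex_re, Complex.exp_ofReal_mul_I_re, Complex.ofReal_re] using hre

lemma integral_sin_two_mul_pInvG_add_cSg (hw : IntervalIntegrable w volume 0 1) :
    ∫ x in (0 : ℝ)..1, Real.sin (2 * pInvG w x + cSg w) = 0 := by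
  have him := intervalIntegral_im (intervalIntegrable_cexp_two_mul_pInvG_add hw (cSg w))
  rw [integral_cexp_two_mul_pInvG_add, Ksg_mul_cexp_cSg] at him
  simpa only [RCLike.im_eq_complex_im, Complex.exp_ofReal_mul_I_im, Complex.ofReal_im] using him

lemma HSg_eq_norm_Ksg (hw : IntervalIntegrable w volume 0 1) : HSg w = 1 / 4 * ‖Ksg w‖ := by
  rw [HSg, integral_cos_two_mul_pInvG_add_cSg hw]

lemma periodic_sin_two_mul_pInvG_add (hper : Function.Periodic v 1)
    (hv : IntervalIntegrable v volume 0 1) {k : ℤ} (hk : ∫ x in (0 : ℝ)..1, v x = k * π) (c : ℝ) :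
    Function.Periodic (fun x => Real.sin (2 * pInvG v x + c)) 1 := fun x => by
  have hphase : 2 * pInvG v (x + 1) + c = 2 * pInvG v x + c + k * (2 * π) := by
    rw [pInvG_add_one hper hv, hk]
    ring
  simp only [hphase, Real.sin_add_int_mul_two_pi]

end Phase

section DirectionalDerivative

open Set

variable {v h : ℝ → ℝ}

lemma hasDerivAt_Ksg_mul_cexp (hv : IntervalIntegrable v volume 0 1)
    (hh : IntervalIntegrable h volume 0 1) (c : ℝ) :
    HasDerivAt (fun ε : ℝ => Ksg (fun x => v x + ε * h x) * Complex.exp (c * Complex.I))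
      (∫ x in (0 : ℝ)..1, Complex.exp ((2 * pInvG v x + c : ℝ) * Complex.I) *
        ((2 * pInvG h x : ℝ) * Complex.I)) 0 := by
  have hphase : ContinuousOn (fun x => 2 * pInvG v x + c) (uIcc 0 1) := by
    have := continuousOn_pInvG hv
    fun_prop
  have hdir : IntervalIntegrable (fun x => 2 * pInvG h x) volume 0 1 :=
    (continuousOn_pInvG hh).intervalIntegrable.const_mul 2
  have hderiv := hasDerivAt_integral_cexp_add_mul_mul_I
    hphase.intervalIntegrable.1.aestronglyMeasurable hdir.1 0
  simp only [← integral_of_le zero_le_one, zero_mul, add_zero] at hderiv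
  refine hderiv.congr_of_eventuallyEq (.of_forall fun ε => ?_)
  dsimp only
  rw [← integral_cexp_two_mul_pInvG_add]
  refine integral_congr fun x hx => ?_
  rw [pInvG_add_const_mul hv hh ε hx]
  ring_nf

lemma eventually_Ksg_add_const_mul_ne_zero (hv : IntervalIntegrable v volume 0 1)
    (hh : IntervalIntegrable h volume 0 1) (hK : Ksg v ≠ 0) :
    ∀ᶠ ε in nhds (0 : ℝ), Ksg (fun x => v x + ε * h x) ≠ 0 :=
  ((hasDerivAt_Ksg_mul_cexp hv hh 0).continuousAt.eventually_ne (by simpa using hK)).mono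
    fun _ => left_ne_zero_of_mul

lemma re_integral_cexp_mul_pInvG_mul_I (hv : IntervalIntegrable v volume 0 1)
    (hh : IntervalIntegrable h volume 0 1) (c : ℝ) :
    (∫ x in (0 : ℝ)..1, Complex.exp ((2 * pInvG v x + c : ℝ) * Complex.I) *
      ((2 * pInvG h x : ℝ) * Complex.I)).re =
      -2 * ∫ x in (0 : ℝ)..1, Real.sin (2 * pInvG v x + c) * pInvG h x := by
  have hdir : ContinuousOn (fun x => ((2 * pInvG h x : ℝ) : ℂ) * Complex.I) (uIcc 0 1) := by
    have := continuousOn_pInvG hh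
    fun_prop
  have hint := (intervalIntegrable_cexp_two_mul_pInvG_add hv c).mul_continuousOn hdir
  rw [← RCLike.re_eq_complex_re, ← intervalIntegral_re hint,
    ← intervalIntegral.integral_const_mul]
  refine integral_congr fun x _ => ?_
  rw [RCLike.re_eq_complex_re, mul_comm, mul_assoc, Complex.re_ofReal_mul, Complex.I_mul_re,
    Complex.exp_ofReal_mul_I_im]
  ring

lemma hasDerivAt_norm_Ksg (hv : IntervalIntegrable v volume 0 1)
    (hh : IntervalIntegrable h volume 0 1) (hK : Ksg v ≠ 0) :
    HasDerivAt (fun ε : ℝ => ‖Ksg (fun x => v x + ε * h x)‖)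
      (-2 * ∫ x in (0 : ℝ)..1, Real.sin (2 * pInvG v x + cSg v) * pInvG h x) 0 := by
  have hrot := hasDerivAt_Ksg_mul_cexp hv hh (cSg v)
  have hrot_zero : Ksg (fun x => v x + 0 * h x) * Complex.exp (cSg v * Complex.I) = ‖Ksg v‖ := by
    simpa using Ksg_mul_cexp_cSg v
  have hpos : ‖Ksg v‖ ≠ 0 := norm_ne_zero_iff.2 hK
  have hnorm := hasDerivAt_norm hrot (by rw [hrot_zero]; exact_mod_cast hpos)
  simpa only [hrot_zero, norm_mul, Complex.norm_exp_ofReal_mul_I, mul_one, Complex.inner,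
    Complex.conj_ofReal, Complex.re_mul_ofReal, Complex.norm_real, norm_norm,
    mul_div_cancel_right₀ _ hpos, re_integral_cexp_mul_pInvG_mul_I hv hh] using hnorm

lemma hasDerivAt_HSg (hv : IntervalIntegrable v volume 0 1)
    (hh : IntervalIntegrable h volume 0 1) (hK : Ksg v ≠ 0) :
    HasDerivAt (fun ε : ℝ => HSg (fun x => v x + ε * h x))
      (-(1 / 2) * ∫ x in (0 : ℝ)..1, Real.sin (2 * pInvG v x + cSg v) * pInvG h x) 0 := by
  simp only [fun ε : ℝ => HSg_eq_norm_Ksg (hv.add (hh.const_mul ε))]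
  exact ((hasDerivAt_norm_Ksg hv hh hK).const_mul (1 / 4)).congr_deriv (by ring)

end DirectionalDerivative

theorem hSg_gradient_general (k : ℤ) (v h : ℝ → ℝ)
    (hv : IntervalIntegrable v volume 0 1) (hvp : Function.Periodic v 1)
    (hvm : (∫ x in (0 : ℝ)..1, v x) = k * π)
    (hh : IntervalIntegrable h volume 0 1) (hhm : (∫ x in (0 : ℝ)..1, h x) = 0)
    (hK : Ksg v ≠ 0) :
    (Continuous (fun x => Real.sin (2 * pInvG v x + cSg v)) ∧
      Function.Periodic (fun x => Real.sin (2 * pInvG v x + cSg v)) 1 ∧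
      (∫ x in (0 : ℝ)..1, Real.sin (2 * pInvG v x + cSg v)) = 0) ∧
    (∀ᶠ ε in nhds (0 : ℝ), Ksg (fun x => v x + ε * h x) ≠ 0) ∧
    HasDerivAt (fun ε : ℝ => HSg (fun x => v x + ε * h x))
      ((1 / 2) * ∫ x in (0 : ℝ)..1,
        pInv (fun y => Real.sin (2 * pInvG v y + cSg v)) x * h x) 0 := by
  have hcont : Continuous (fun x => Real.sin (2 * pInvG v x + cSg v)) := by
    have := continuous_pInvG (hvp.intervalIntegrable₀ one_ne_zero hv)
    fun_prop
  have hmean := integral_sin_two_mul_pInvG_add_cSg hv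
  refine ⟨⟨hcont, periodic_sin_two_mul_pInvG_add hvp hv hvm (cSg v), hmean⟩,
    eventually_Ksg_add_const_mul_ne_zero hv hh hK, (hasDerivAt_HSg hv hh hK).congr_deriv ?_⟩
  rw [pInvG_eq_pInv hhm, integral_mul_pInv_eq_neg (hcont.intervalIntegrable 0 1) hh hmean hhm]
  ring

/-- (a) `sin (2 ∂ₓ⁻¹v + c_sg(v))` is continuous, 1-periodic, mean-zero;
(b) for small `ε` the quantity `Ksg (v + εh)` does not vanish; (c) the directional
derivative of `H_sg` at `v` in direction `h` is
`½ ∫₀¹ (∂ₓ⁻¹ sin (2 ∂ₓ⁻¹v + c_sg(v)))(x) · h x dx`. -/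
theorem hSg_gradient (k : ℤ) (v h : ℝ → ℝ)
    (hv : Continuous v) (hvp : Function.Periodic v 1)
    (hvm : (∫ x in (0:ℝ)..1, v x) = k * π)
    (hh : Continuous h) (hhp : Function.Periodic h 1)
    (hhm : (∫ x in (0:ℝ)..1, h x) = 0)
    (hK : Ksg v ≠ 0) :
    (Continuous (fun x => Real.sin (2 * pInvG v x + cSg v)) ∧
      Function.Periodic (fun x => Real.sin (2 * pInvG v x + cSg v)) 1 ∧
      (∫ x in (0:ℝ)..1, Real.sin (2 * pInvG v x + cSg v)) = 0) ∧
    (∀ᶠ ε in nhds (0:ℝ), Ksg (fun x => v x + ε * h x) ≠ 0) ∧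
    HasDerivAt (fun ε : ℝ => HSg (fun x => v x + ε * h x))
      ((1 / 2) * ∫ x in (0:ℝ)..1,
        pInv (fun y => Real.sin (2 * pInvG v y + cSg v)) x * h x) 0 :=
  hSg_gradient_general k v h (hv.intervalIntegrable 0 1) hvp hvm (hh.intervalIntegrable 0 1) hhm hK
end

section
/- Fix k ∈ ℤ. Let u: ℝ × ℝ → ℝ be twice continuously differentiable with u(x+1,t) = u(x,t) + 2πk for all x,t, satisfying the sine-Gordon equation ∂ₓ∂ₜu(x,t) = sin(u(x,t)) for all x,t, and suppose ∫₀¹ cos(u(x,t)) dx > 0 for all t. Then for every t one has ∫₀¹ sin(u(x,t)) dx = 0; moreover, setting v(x,t) := ∂ₓu(x,t)/2, for every t the function v(·,t) is continuous, 1-periodic with ∫₀¹ v(x,t) dx = kπ and ∫₀¹ exp(2i(∂ₓ⁻¹v(·,t))(x)) dx ≠ 0, and one has u(x,t) ≡ 2(∂ₓ⁻¹v(·,t))(x) + c_sg(v(·,t)) (mod 2π) for all x,t, as well as ∂ₜv(x,t) = ½ sin( 2(∂ₓ⁻¹v(·,t))(x) + c_sg(v(·,t)) ) for all x,t. -/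
open MeasureTheory Real intervalIntegral

/-!
Since `∂ₜu(·, t)` is 1-periodic, integrating the equation over a period gives `∫₀¹ sin u = 0`.
Hence `∫₀¹ exp (i u) = ∫₀¹ cos u` is a positive real number. Now `2 ∂ₓ⁻¹v = u + d` with `d`
independent of `x`, so `Ksg v` is a positive multiple of `exp (i d)`, and `c_sg(v) ≡ -d` recovers
exactly the constant of integration that is lost in passing from `u` to `v`.
-/

section Deriv

variable {𝕜 E : Type*} [NontriviallyNormedField 𝕜] [NormedAddCommGroup E] [NormedSpace 𝕜 E]

theorem hasDerivAt_prodMk_left {f : 𝕜 × 𝕜 → E} {x t : 𝕜} (hf : DifferentiableAt 𝕜 f (x, t)) :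
    HasDerivAt (fun x' => f (x', t)) (fderiv 𝕜 f (x, t) (1, 0)) x :=
  hf.hasFDerivAt.comp_hasDerivAt x ((hasDerivAt_id x).prodMk (hasDerivAt_const x t))

theorem hasDerivAt_prodMk_right {f : 𝕜 × 𝕜 → E} {x t : 𝕜} (hf : DifferentiableAt 𝕜 f (x, t)) :
    HasDerivAt (fun t' => f (x, t')) (fderiv 𝕜 f (x, t) (0, 1)) t :=
  hf.hasFDerivAt.comp_hasDerivAt t ((hasDerivAt_const t x).prodMk (hasDerivAt_id t))

theorem contDiff_uncurry_deriv_right {u : 𝕜 → 𝕜 → E} {m n : WithTop ℕ∞}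
    (hu : ContDiff 𝕜 n (Function.uncurry u)) (hmn : m + 1 ≤ n) :
    ContDiff 𝕜 m (Function.uncurry fun x t => deriv (u x) t) := by
  have hu' : ContDiff 𝕜 n (Function.uncurry fun p : 𝕜 × 𝕜 => u p.1) :=
    hu.comp ((contDiff_fst.comp contDiff_fst).prodMk contDiff_snd)
  exact hu'.fderiv_apply contDiff_snd contDiff_const hmn

theorem fderiv_fderiv_apply_const {V : Type*} [NormedAddCommGroup V] [NormedSpace 𝕜 V]
    {f : V → E} {p : V} (hf : DifferentiableAt 𝕜 (fderiv 𝕜 f) p) (a b : V) :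
    fderiv 𝕜 (fun q => fderiv 𝕜 f q a) p b = fderiv 𝕜 (fderiv 𝕜 f) p b a := by
  simp [fderiv_clm_apply hf (differentiableAt_const a)]

theorem periodic_deriv_of_add_const {f : 𝕜 → E} {T : 𝕜} {c : E}
    (hf : ∀ x, f (x + T) = f x + c) : Function.Periodic (deriv f) T := fun x => by
  rw [← deriv_comp_add_const]
  simp only [hf, deriv_add_const]

end Deriv

theorem deriv_deriv_comm_of_contDiff {𝕜 E : Type*} [RCLike 𝕜] [NormedAddCommGroup E]
    [NormedSpace 𝕜 E] {u : 𝕜 → 𝕜 → E} (hu : ContDiff 𝕜 2 (Function.uncurry u)) (x t : 𝕜) :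
    deriv (fun t' => deriv (fun x' => u x' t') x) t =
      deriv (fun x' => deriv (fun t' => u x' t') t) x := by
  let U := Function.uncurry u
  have hU : Differentiable 𝕜 U := hu.differentiable two_ne_zero
  have hDU : Differentiable 𝕜 (fderiv 𝕜 U) :=
    (hu.fderiv_right (m := 1) one_add_one_eq_two.le).differentiable one_ne_zero
  have hDU_apply (a p : 𝕜 × 𝕜) : DifferentiableAt 𝕜 (fun q => fderiv 𝕜 U q a) p :=
    (hDU p).clm_apply (differentiableAt_const a)
  have hux (t' : 𝕜) : deriv (fun x' => u x' t') x = fderiv 𝕜 U (x, t') (1, 0) :=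
    (hasDerivAt_prodMk_left (hU (x, t'))).deriv
  have hut (x' : 𝕜) : deriv (fun t' => u x' t') t = fderiv 𝕜 U (x', t) (0, 1) :=
    (hasDerivAt_prodMk_right (hU (x', t))).deriv
  have hsymm : IsSymmSndFDerivAt 𝕜 U (x, t) := hu.contDiffAt.isSymmSndFDerivAt (by simp)
  calc deriv (fun t' => deriv (fun x' => u x' t') x) t
      = deriv (fun t' => fderiv 𝕜 U (x, t') (1, 0)) t := by simp only [hux]
    _ = fderiv 𝕜 (fderiv 𝕜 U) (x, t) (0, 1) (1, 0) := by
      rw [(hasDerivAt_prodMk_right (hDU_apply (1, 0) (x, t))).deriv,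
        fderiv_fderiv_apply_const (hDU _)]
    _ = fderiv 𝕜 (fderiv 𝕜 U) (x, t) (1, 0) (0, 1) := hsymm.eq _ _
    _ = deriv (fun x' => fderiv 𝕜 U (x', t) (0, 1)) x := by
      rw [(hasDerivAt_prodMk_left (hDU_apply (0, 1) (x, t))).deriv,
        fderiv_fderiv_apply_const (hDU _)]
    _ = deriv (fun x' => deriv (fun t' => u x' t') t) x := by simp only [hut]

theorem integral_deriv_deriv_eq_zero_of_add_const {E : Type*} [NormedAddCommGroup E]
    [NormedSpace ℝ E] [CompleteSpace E] {u : ℝ → ℝ → E} {T : ℝ} {c : E}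
    (hu : ContDiff ℝ 2 (Function.uncurry u)) (hshift : ∀ x t, u (x + T) t = u x t + c) (a t : ℝ) :
    ∫ x in a..(a + T), deriv (fun x' => deriv (fun t' => u x' t') t) x = 0 := by
  have hut : ContDiff ℝ 1 fun x => deriv (fun t' => u x t') t :=
    (contDiff_uncurry_deriv_right hu one_add_one_eq_two.le).comp (contDiff_prodMk_left t)
  rw [integral_deriv_eq_sub (fun x _ => hut.differentiable one_ne_zero x)
    (hut.continuous_deriv_one.intervalIntegrable _ _)]
  simp only [hshift, deriv_add_const, sub_self]

theorem integral_cexp_mul_I {w : ℝ → ℝ} {a b : ℝ} (hw : Continuous w) :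
    ∫ x in a..b, Complex.exp (w x * Complex.I) =
      (∫ x in a..b, cos (w x) : ℝ) + (∫ x in a..b, sin (w x) : ℝ) * Complex.I := by
  simp only [Complex.exp_mul_I, ← Complex.ofReal_cos, ← Complex.ofReal_sin]
  rw [intervalIntegral.integral_add, intervalIntegral.integral_mul_const, integral_ofReal,
    integral_ofReal]
  all_goals exact Continuous.intervalIntegrable (by fun_prop) _ _

theorem pInvG_eq_integral_add {v : ℝ → ℝ} {x : ℝ} (hv : IntervalIntegrable v volume 0 x) :
    pInvG v x = (∫ s in (0 : ℝ)..x, v s) + pInvG v 0 := by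
  simp only [pInvG, pInv]
  rw [integral_sub hv intervalIntegrable_const]
  simp only [intervalIntegral.integral_const, integral_same, smul_eq_mul]
  ring

theorem integral_deriv_div_two {w : ℝ → ℝ} (hw : ContDiff ℝ 1 w) (a b : ℝ) :
    ∫ x in a..b, deriv w x / 2 = (w b - w a) / 2 := by
  rw [intervalIntegral.integral_div, integral_deriv_eq_sub
    (fun x _ => hw.differentiable one_ne_zero x) (hw.continuous_deriv_one.intervalIntegrable _ _)]

theorem two_mul_pInvG_deriv_div_two {w : ℝ → ℝ} (hw : ContDiff ℝ 1 w) (x : ℝ) :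
    2 * pInvG (fun y => deriv w y / 2) x =
      w x + (2 * pInvG (fun y => deriv w y / 2) 0 - w 0) := by
  rw [pInvG_eq_integral_add ((hw.continuous_deriv_one.div_const 2).intervalIntegrable 0 x),
    integral_deriv_div_two hw]
  ring

theorem Ksg_eq_integral_mul_exp {v w : ℝ → ℝ} {d : ℝ} (h : ∀ x, 2 * pInvG v x = w x + d) :
    Ksg v = (∫ x in (0 : ℝ)..1, Complex.exp (w x * Complex.I)) * Complex.exp (d * Complex.I) := by
  have hexp (x : ℝ) : Complex.exp (2 * (pInvG v x : ℂ) * Complex.I) =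
      Complex.exp (w x * Complex.I) * Complex.exp (d * Complex.I) := by
    rw [← Complex.exp_add, ← add_mul]
    exact_mod_cast congrArg (fun r : ℝ => Complex.exp (r * Complex.I)) (h x)
  simp only [Ksg, hexp, intervalIntegral.integral_mul_const]

theorem coe_cSg_eq_neg {v : ℝ → ℝ} {r d : ℝ} (hr : 0 < r)
    (h : Ksg v = r * Complex.exp (d * Complex.I)) : (cSg v : Real.Angle) = -d := by
  rw [cSg, h, Complex.arg_real_mul _ hr, Complex.arg_exp_mul_I, Real.Angle.coe_neg,
    Real.Angle.coe_toIocMod]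

theorem Ksg_deriv_div_two {w : ℝ → ℝ} (hw : ContDiff ℝ 1 w)
    (hsin : ∫ x in (0 : ℝ)..1, sin (w x) = 0) :
    Ksg (fun y => deriv w y / 2) = (∫ x in (0 : ℝ)..1, cos (w x) : ℝ) *
      Complex.exp ((2 * pInvG (fun y => deriv w y / 2) 0 - w 0 : ℝ) * Complex.I) := by
  rw [Ksg_eq_integral_mul_exp (two_mul_pInvG_deriv_div_two hw), integral_cexp_mul_I hw.continuous,
    hsin, Complex.ofReal_zero, zero_mul, add_zero]

theorem Ksg_deriv_div_two_ne_zero {w : ℝ → ℝ} (hw : ContDiff ℝ 1 w)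
    (hsin : ∫ x in (0 : ℝ)..1, sin (w x) = 0) (hcos : ∫ x in (0 : ℝ)..1, cos (w x) ≠ 0) :
    Ksg (fun y => deriv w y / 2) ≠ 0 := by
  rw [Ksg_deriv_div_two hw hsin]
  exact mul_ne_zero (Complex.ofReal_ne_zero.2 hcos) (Complex.exp_ne_zero _)

theorem coe_eq_two_mul_pInvG_add_cSg {w : ℝ → ℝ} (hw : ContDiff ℝ 1 w)
    (hsin : ∫ x in (0 : ℝ)..1, sin (w x) = 0) (hcos : 0 < ∫ x in (0 : ℝ)..1, cos (w x)) (x : ℝ) :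
    (w x : Real.Angle) =
      (2 * pInvG (fun y => deriv w y / 2) x + cSg (fun y => deriv w y / 2) : ℝ) := by
  rw [two_mul_pInvG_deriv_div_two hw, Real.Angle.coe_add,
    coe_cSg_eq_neg hcos (Ksg_deriv_div_two hw hsin), Real.Angle.coe_add, add_neg_cancel_right]

theorem sineGordon_reduction_plus_general (k : ℝ) (u : ℝ → ℝ → ℝ)
    (hreg : ContDiff ℝ 2 (Function.uncurry u))
    (hch : ∀ x t, u (x + 1) t = u x t + 2 * π * k)
    (hpde : ∀ x t, deriv (fun x' => deriv (fun t' => u x' t') t) x = Real.sin (u x t)) (t : ℝ) :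
    (∫ x in (0 : ℝ)..1, Real.sin (u x t)) = 0 ∧
    Continuous (fun x => deriv (fun x' => u x' t) x / 2) ∧
    Function.Periodic (fun x => deriv (fun x' => u x' t) x / 2) 1 ∧
    (∫ x in (0 : ℝ)..1, deriv (fun x' => u x' t) x / 2) = k * π ∧
    (0 < ∫ x in (0 : ℝ)..1, Real.cos (u x t) →
      Ksg (fun y => deriv (fun x' => u x' t) y / 2) ≠ 0 ∧ ∀ x,
      (∃ n : ℤ, u x t = 2 * pInvG (fun y => deriv (fun x' => u x' t) y / 2) x
          + cSg (fun y => deriv (fun x' => u x' t) y / 2) + 2 * π * n) ∧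
      deriv (fun t' => deriv (fun x' => u x' t') x / 2) t
        = (1 / 2) * Real.sin (2 * pInvG (fun y => deriv (fun x' => u x' t) y / 2) x
            + cSg (fun y => deriv (fun x' => u x' t) y / 2))) := by
  have hw : ContDiff ℝ 1 fun x => u x t :=
    (hreg.of_le one_le_two).comp (contDiff_prodMk_left t)
  have hsin : ∫ x in (0 : ℝ)..1, sin (u x t) = 0 := by
    simpa only [hpde, zero_add] using integral_deriv_deriv_eq_zero_of_add_const hreg hch 0 t
  refine ⟨hsin, hw.continuous_deriv_one.div_const 2, fun x => ?_, ?_, fun hcos =>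
    ⟨Ksg_deriv_div_two_ne_zero hw hsin hcos.ne', fun x => ?_⟩⟩
  · exact congrArg (· / 2) (periodic_deriv_of_add_const (hch · t) x)
  · have hone : u 1 t = u 0 t + 2 * π * k := by simpa only [zero_add] using hch 0 t
    rw [integral_deriv_div_two hw, hone]
    ring
  · have hangle := coe_eq_two_mul_pInvG_add_cSg hw hsin hcos x
    obtain ⟨n, hn⟩ := Real.Angle.angle_eq_iff_two_pi_dvd_sub.1 hangle
    refine ⟨⟨n, eq_add_of_sub_eq' hn⟩, ?_⟩
    rw [deriv_div_const, deriv_deriv_comm_of_contDiff hreg, hpde, ← Real.Angle.sin_coe, hangle,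
      Real.Angle.sin_coe]
    ring

/-- a classical solution of sine-Gordon of topological charge `k` with
`∫₀¹ cos (u x t) dx > 0` for all `t` satisfies `∫₀¹ sin (u x t) dx = 0` for all `t`;
moreover `v(·,t) = ∂ₓu(·,t)/2` is continuous, 1-periodic of mean `kπ` with
`Ksg (v(·,t)) ≠ 0`, `u ≡ 2 ∂ₓ⁻¹v(·,t) + c_sg(v(·,t)) (mod 2π)` and
`∂ₜv = ½ sin (2 ∂ₓ⁻¹ v(·,t) + c_sg(v(·,t)))`. -/
theorem sineGordon_reduction_plus (k : ℤ) (u : ℝ → ℝ → ℝ)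
    (hreg : ContDiff ℝ 2 (Function.uncurry u))
    (hch : ∀ x t, u (x + 1) t = u x t + 2 * π * k)
    (hpde : ∀ x t, deriv (fun x' => deriv (fun t' => u x' t') t) x = Real.sin (u x t))
    (hcos : ∀ t, 0 < ∫ x in (0:ℝ)..1, Real.cos (u x t)) :
    (∀ t, (∫ x in (0:ℝ)..1, Real.sin (u x t)) = 0) ∧
    (∀ t, Continuous (fun x => deriv (fun x' => u x' t) x / 2) ∧
      Function.Periodic (fun x => deriv (fun x' => u x' t) x / 2) 1 ∧
      (∫ x in (0:ℝ)..1, deriv (fun x' => u x' t) x / 2) = k * π ∧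
      Ksg (fun y => deriv (fun x' => u x' t) y / 2) ≠ 0) ∧
    (∀ x t, ∃ n : ℤ, u x t = 2 * pInvG (fun y => deriv (fun x' => u x' t) y / 2) x
        + cSg (fun y => deriv (fun x' => u x' t) y / 2) + 2 * π * n) ∧
    (∀ x t, deriv (fun t' => deriv (fun x' => u x' t') x / 2) t
        = (1 / 2) * Real.sin (2 * pInvG (fun y => deriv (fun x' => u x' t) y / 2) x
            + cSg (fun y => deriv (fun x' => u x' t) y / 2))) := by
  choose hsin hcont hper hmean hpos using sineGordon_reduction_plus_general k u hreg hch hpde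
  exact ⟨hsin, fun t => ⟨hcont t, hper t, hmean t, (hpos t (hcos t)).1⟩,
    fun x t => ((hpos t (hcos t)).2 x).1, fun x t => ((hpos t (hcos t)).2 x).2⟩
end
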